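/- For τ in the upper half-plane and z ∈ ℂ, ϑ₁₀(2τ, z + τ/2) · ϑ₁₀(2τ, z − τ/2) = q^{−1/8} (η(2τ)²/η(τ)) · ϑ₀₀(τ, z), where q = e^{2πiτ}. -/

import Mathlib

open Real Complex Filter Topology

noncomputable section

noncomputable def theta00 (τ z : ℂ) : ℂ :=
  ∑' n : ℤ, Complex.exp (2*(π:ℂ)*Complex.I*(n:ℂ)*z) *
    Complex.exp (2*(π:ℂ)*Complex.I*τ*((n:ℂ)^2/2))

noncomputable def theta01 (τ z : ℂ) : ℂ :=
  ∑' n : ℤ, (-1:ℂ)^n * Complex.exp (2*(π:ℂ)*Complex.I*(n:ℂ)*z) *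
    Complex.exp (2*(π:ℂ)*Complex.I*τ*((n:ℂ)^2/2))

noncomputable def theta10 (τ z : ℂ) : ℂ :=
  ∑' n : ℤ, Complex.exp (2*(π:ℂ)*Complex.I*((n:ℂ)+1/2)*z) *
    Complex.exp (2*(π:ℂ)*Complex.I*τ*((1/2)*((n:ℂ)+1/2)^2))

noncomputable def theta11 (τ z : ℂ) : ℂ :=
  Complex.I * ∑' n : ℤ, (-1:ℂ)^n * Complex.exp (2*(π:ℂ)*Complex.I*((n:ℂ)+1/2)*z) *
    Complex.exp (2*(π:ℂ)*Complex.I*τ*((1/2)*((n:ℂ)+1/2)^2))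

noncomputable def dedekindEta (τ : ℂ) : ℂ :=
  Complex.exp ((π:ℂ)*Complex.I*τ/12) *
    ∏' n : ℕ, (1 - Complex.exp (2*(π:ℂ)*Complex.I*τ*((n:ℂ)+1)))

/-!
Completing the square turns each factor `ϑ₁₀(2τ, z ± τ/2)` into `ϑ₀₀(2τ, z ∓ τ/2)`, up to
exponential factors that cancel. With `p = e^{πiτ}` and `x = e^{2πiz}`, the Jacobi triple product
writes these two theta functions in terms of `(-px^{±1}; p⁴)_∞` and `(-p³x^{±1}; p⁴)_∞`. These are
the factors of `(-px^{±1}; p²)_∞` of even and of odd index, so together they give the triple product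
of `ϑ₀₀(τ, z)`; the remaining factor `(p⁴; p⁴)_∞² / (p²; p²)_∞` is the eta quotient. The triple
product is the limit of its finite form, a shifted `q`-binomial theorem.
-/

/-- The finite `q`-Pochhammer symbol `(a; q)_n = ∏_{i < n} (1 - a q ^ i)`. -/
def qPochhammer {R : Type*} [CommRing R] (a q : R) (n : ℕ) : R :=
  ∏ i ∈ Finset.range n, (1 - a * q ^ i)

/-- The infinite `q`-Pochhammer symbol `(a; q)_∞ = ∏_{i ≥ 0} (1 - a q ^ i)`, the limit of the finite
ones when `‖q‖ < 1`. -/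
def qPochhammerInf {R : Type*} [CommRing R] [TopologicalSpace R] (a q : R) : R :=
  ∏' i : ℕ, (1 - a * q ^ i)

/-- The theta series `∑_{n ∈ ℤ} p ^ (n ^ 2) x ^ n`, as a function of the nome `p` and of the
multiplicative variable `x`. -/
def thetaSeries {K : Type*} [DivisionRing K] [TopologicalSpace K] (p x : K) : K :=
  ∑' n : ℤ, p ^ (n ^ 2) * x ^ n

section FiniteProducts

open Finset.HasAntidiagonal (antidiagonal mem_antidiagonal)

section CommRing

variable {R : Type*} [CommRing R] (a q : R)

lemma qPochhammer_zero : qPochhammer a q 0 = 1 := Finset.prod_range_zero _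

lemma qPochhammer_succ (n : ℕ) :
    qPochhammer a q (n + 1) = qPochhammer a q n * (1 - a * q ^ n) :=
  Finset.prod_range_succ _ _

lemma qPochhammer_add (m n : ℕ) :
    qPochhammer a q (m + n) = qPochhammer a q m * qPochhammer (a * q ^ m) q n := by
  simp only [qPochhammer, Finset.prod_range_add, pow_add, mul_assoc]

end CommRing

variable {K : Type*} [Field K]

lemma qPochhammer_reflect {a q : K} (ha : a ≠ 0) (hq : q ≠ 0) (n : ℕ) :
    (-a) ^ n * q ^ n.choose 2 * qPochhammer (q ^ (1 - n : ℤ) / a) q n = qPochhammer a q n := by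
  induction n with
  | zero => simp [qPochhammer_zero]
  | succ n ih =>
    have hshift : q ^ (1 - (n + 1 : ℕ) : ℤ) / a * q ^ 1 = q ^ (1 - n : ℤ) / a := by
      rw [pow_one, div_mul_eq_mul_div, ← zpow_add_one₀ hq]
      congr 2
      push_cast
      ring
    have hfactor : -a * q ^ n * (1 - q ^ (1 - (n + 1 : ℕ) : ℤ) / a) = 1 - a * q ^ n := by
      have hexp : (1 - (n + 1 : ℕ) : ℤ) = -n := by push_cast; ring
      rw [hexp, zpow_neg, zpow_natCast]
      field_simp
      ring
    rw [add_comm n 1, qPochhammer_add, add_comm 1 n, hshift, qPochhammer_succ _ _ 0,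
      qPochhammer_zero, qPochhammer_succ, ← ih, ← hfactor, Nat.choose_succ_succ' n 1,
      Nat.choose_one_right]
    ring

lemma one_sub_mul_pow_self_ne_zero {q : K} (hq : ¬IsOfFinOrder q) (n : ℕ) : 1 - q * q ^ n ≠ 0 := by
  intro h
  rw [← pow_succ', sub_eq_zero] at h
  exact hq (isOfFinOrder_iff_pow_eq_one.mpr ⟨n + 1, n.succ_pos, h.symm⟩)

lemma qPochhammer_self_ne_zero {q : K} (hq : ¬IsOfFinOrder q) (n : ℕ) : qPochhammer q q n ≠ 0 :=
  Finset.prod_ne_zero_iff.mpr fun i _ ↦ one_sub_mul_pow_self_ne_zero hq i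

/-- The term of degree `k` of the `q`-binomial expansion of `(-x; q)_(j + k)`, divided by
`(q; q)_(j + k)`. It is indexed by both `j` and `k` to avoid subtracting natural numbers. -/
def qBinomialTerm (q x : K) (j k : ℕ) : K :=
  q ^ k.choose 2 * x ^ k / (qPochhammer q q j * qPochhammer q q k)

lemma one_sub_pow_mul_qBinomialTerm_left {q : K} (hq : ¬IsOfFinOrder q) (x : K) (j k : ℕ) :
    (1 - q ^ (j + 1)) * qBinomialTerm q x (j + 1) k = qBinomialTerm q x j k := by
  have hj := qPochhammer_self_ne_zero hq j
  have hk := qPochhammer_self_ne_zero hq k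
  have hj' := one_sub_mul_pow_self_ne_zero hq j
  simp only [qBinomialTerm, qPochhammer_succ, pow_succ' q j]
  field_simp

lemma one_sub_pow_mul_qBinomialTerm_right {q : K} (hq : ¬IsOfFinOrder q) (x : K) (j k : ℕ) :
    (1 - q ^ (k + 1)) * qBinomialTerm q x j (k + 1) = x * q ^ k * qBinomialTerm q x j k := by
  have hj := qPochhammer_self_ne_zero hq j
  have hk := qPochhammer_self_ne_zero hq k
  have hk' := one_sub_mul_pow_self_ne_zero hq k
  simp only [qBinomialTerm, qPochhammer_succ, pow_succ' q k, Nat.choose_succ_succ' k 1,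
    Nat.choose_one_right]
  field_simp
  ring

-- Split `1 - q ^ (j + k) = (1 - q ^ j) + q ^ j * (1 - q ^ k)`: each part lowers one index.
lemma one_sub_pow_mul_sum_antidiagonal_qBinomialTerm {q : K} (hq : ¬IsOfFinOrder q) (x : K)
    (N : ℕ) :
    (1 - q ^ (N + 1)) * ∑ jk ∈ antidiagonal (N + 1), qBinomialTerm q x jk.1 jk.2 =
      (1 + x * q ^ N) * ∑ jk ∈ antidiagonal N, qBinomialTerm q x jk.1 jk.2 := by
  set t := qBinomialTerm q x
  calc (1 - q ^ (N + 1)) * ∑ jk ∈ antidiagonal (N + 1), t jk.1 jk.2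
      = ∑ jk ∈ antidiagonal (N + 1), (1 - q ^ jk.1) * t jk.1 jk.2 +
          ∑ jk ∈ antidiagonal (N + 1), q ^ jk.1 * ((1 - q ^ jk.2) * t jk.1 jk.2) := by
        rw [Finset.mul_sum, ← Finset.sum_add_distrib]
        refine Finset.sum_congr rfl fun jk hjk ↦ ?_
        rw [← mem_antidiagonal.mp hjk]
        ring
    _ = ∑ jk ∈ antidiagonal N, t jk.1 jk.2 +
          ∑ jk ∈ antidiagonal N, q ^ jk.1 * (x * q ^ jk.2 * t jk.1 jk.2) := by
        rw [Finset.Nat.sum_antidiagonal_succ, Finset.Nat.sum_antidiagonal_succ']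
        simp [t, one_sub_pow_mul_qBinomialTerm_left hq, one_sub_pow_mul_qBinomialTerm_right hq]
    _ = (1 + x * q ^ N) * ∑ jk ∈ antidiagonal N, t jk.1 jk.2 := by
        rw [Finset.mul_sum, ← Finset.sum_add_distrib]
        refine Finset.sum_congr rfl fun jk hjk ↦ ?_
        rw [← mem_antidiagonal.mp hjk]
        ring

theorem q_binomial_theorem {q : K} (hq : ¬IsOfFinOrder q) (x : K) (N : ℕ) :
    qPochhammer (-x) q N =
      qPochhammer q q N * ∑ jk ∈ antidiagonal N, qBinomialTerm q x jk.1 jk.2 := by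
  induction N with
  | zero => simp [qBinomialTerm, qPochhammer_zero]
  | succ N ih =>
    rw [qPochhammer_succ, qPochhammer_succ, ih, ← pow_succ', mul_assoc _ _ (Finset.sum _ _),
      one_sub_pow_mul_sum_antidiagonal_qBinomialTerm hq]
    ring

lemma sum_antidiagonal_two_mul_eq_sum_Icc {M : Type*} [AddCommMonoid M] (f : ℕ → ℕ → M) (m : ℕ) :
    ∑ jk ∈ antidiagonal (2 * m), f jk.1 jk.2 =
      ∑ n ∈ Finset.Icc (-m : ℤ) m, f (m - n).toNat (m + n).toNat := by
  refine Finset.sum_nbij' (fun jk ↦ (jk.2 : ℤ) - m) (fun n ↦ ((m - n).toNat, (m + n).toNat))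
    ?_ ?_ ?_ ?_ ?_
  · simp only [mem_antidiagonal, Finset.mem_Icc]
    omega
  · simp only [mem_antidiagonal, Finset.mem_Icc]
    omega
  · simp only [mem_antidiagonal, Prod.ext_iff]
    omega
  · simp only [Finset.mem_Icc]
    omega
  · simp only [mem_antidiagonal]
    intro jk hjk
    congr 1 <;> omega

lemma two_mul_choose_two_add_self (n : ℕ) : 2 * n.choose 2 + n = n ^ 2 := by
  induction n with
  | zero => rfl
  | succ n ih =>
    rw [Nat.choose_succ_succ' n 1, Nat.choose_one_right]
    linarith

-- The shift `x ↦ p ^ (1 - 2 * m) * x` centres the quadratic exponent of the `q`-binomial expansion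
-- of length `2 * m` at its middle term `n = 0`.
lemma qBinomialTerm_sq_zpow_mul {p x : K} (hp : p ≠ 0) (hx : x ≠ 0) {m j k : ℕ} {n : ℤ}
    (hk : (k : ℤ) = m + n) :
    qBinomialTerm (p ^ 2) (p ^ (1 - 2 * m : ℤ) * x) j k =
      x ^ m / p ^ m ^ 2 * (p ^ n ^ 2 * x ^ n /
        (qPochhammer (p ^ 2) (p ^ 2) j * qPochhammer (p ^ 2) (p ^ 2) k)) := by
  have hchoose : (2 * k.choose 2 + k : ℤ) = k ^ 2 := mod_cast two_mul_choose_two_add_self k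
  have hpow : (p ^ 2) ^ k.choose 2 * (p ^ (1 - 2 * m : ℤ)) ^ k = p ^ n ^ 2 / p ^ m ^ 2 := by
    rw [eq_div_iff (pow_ne_zero _ hp), ← pow_mul, ← zpow_natCast p, ← zpow_natCast p,
      ← zpow_natCast (p ^ _), ← zpow_mul, ← zpow_add₀ hp, ← zpow_add₀ hp]
    congr 1
    push_cast
    rw [hk] at hchoose ⊢
    linear_combination hchoose
  have hxpow : x ^ k = x ^ m * x ^ n := by
    rw [← zpow_natCast x k, hk, zpow_add₀ hx, zpow_natCast]
  rw [qBinomialTerm, mul_pow, ← mul_assoc, hpow, hxpow]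
  ring

lemma qPochhammer_zpow_eq_mul {p x : K} (hp : p ≠ 0) (hx : x ≠ 0) (m : ℕ) :
    qPochhammer (-(p ^ (1 - 2 * m : ℤ) * x)) (p ^ 2) (2 * m) =
      x ^ m / p ^ m ^ 2 *
        (qPochhammer (-(p * x)) (p ^ 2) m * qPochhammer (-(p / x)) (p ^ 2) m) := by
  have hupper : -(p ^ (1 - 2 * m : ℤ) * x) * (p ^ 2) ^ m = -(p * x) := by
    rw [← pow_mul, ← zpow_natCast p, neg_mul, mul_right_comm, ← zpow_add₀ hp]
    simp
  have hlower : (p ^ 2) ^ (1 - m : ℤ) / -(p / x) = -(p ^ (1 - 2 * m : ℤ) * x) := by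
    have hexp : (1 - 2 * m : ℤ) = (2 : ℕ) * (1 - m) - 1 := by push_cast; ring
    rw [hexp, zpow_sub_one₀ hp, zpow_mul, zpow_natCast]
    field_simp
  have hscale : x ^ m / p ^ m ^ 2 * ((- -(p / x)) ^ m * (p ^ 2) ^ m.choose 2) = 1 := by
    rw [neg_neg, div_pow, ← pow_mul, ← two_mul_choose_two_add_self m, pow_add]
    field_simp
  rw [two_mul m, qPochhammer_add, hupper,
    ← qPochhammer_reflect (neg_ne_zero.mpr (div_ne_zero hp hx)) (pow_ne_zero 2 hp), hlower]
  linear_combination (- qPochhammer (-(p ^ (1 - 2 * m : ℤ) * x)) (p ^ 2) m *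
    qPochhammer (-(p * x)) (p ^ 2) m) * hscale

theorem finite_jacobi_triple_product {p x : K} (hp : p ≠ 0)
    (hp' : ¬IsOfFinOrder (p ^ 2)) (hx : x ≠ 0) (m : ℕ) :
    qPochhammer (-(p * x)) (p ^ 2) m * qPochhammer (-(p / x)) (p ^ 2) m =
      qPochhammer (p ^ 2) (p ^ 2) (2 * m) * ∑ n ∈ Finset.Icc (-m : ℤ) m,
        p ^ n ^ 2 * x ^ n / (qPochhammer (p ^ 2) (p ^ 2) (m - n).toNat *
          qPochhammer (p ^ 2) (p ^ 2) (m + n).toNat) := by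
  have hc : x ^ m / p ^ m ^ 2 ≠ 0 := div_ne_zero (pow_ne_zero _ hx) (pow_ne_zero _ hp)
  refine mul_left_cancel₀ hc ?_
  rw [← qPochhammer_zpow_eq_mul hp hx, q_binomial_theorem hp',
    sum_antidiagonal_two_mul_eq_sum_Icc, mul_left_comm, Finset.mul_sum _ _ (x ^ m / p ^ m ^ 2)]
  congr 1
  refine Finset.sum_congr rfl fun n hn ↦ qBinomialTerm_sq_zpow_mul hp hx ?_
  rw [Finset.mem_Icc] at hn
  omega

end FiniteProducts

section InfiniteProducts

section NormedCommRing

variable {R : Type*} [NormedCommRing R] {q : R}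

lemma summable_norm_neg_mul_pow (hq : ‖q‖ < 1) (a : R) : Summable fun i : ℕ ↦ ‖-(a * q ^ i)‖ := by
  simpa only [norm_neg] using (summable_norm_geometric_of_norm_lt_one hq).norm.mul_left ‖a‖
    |>.of_nonneg_of_le (fun _ ↦ norm_nonneg _) fun i ↦ by simpa using norm_mul_le a (q ^ i)

variable [NormOneClass R] [CompleteSpace R]

lemma multipliable_one_sub_mul_pow (hq : ‖q‖ < 1) (a : R) :
    Multipliable fun i : ℕ ↦ 1 - a * q ^ i := by
  simpa only [sub_eq_add_neg] using
    multipliable_one_add_of_summable (summable_norm_neg_mul_pow hq a)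

lemma tendsto_qPochhammer (hq : ‖q‖ < 1) (a : R) :
    Tendsto (qPochhammer a q) atTop (𝓝 (qPochhammerInf a q)) :=
  (multipliable_one_sub_mul_pow hq a).tendsto_prod_tprod_nat

lemma qPochhammerInf_sq_mul (hq : ‖q ^ 2‖ < 1) (a : R) :
    qPochhammerInf a (q ^ 2) * qPochhammerInf (a * q) (q ^ 2) = qPochhammerInf a q := by
  have heven : (fun i : ℕ ↦ 1 - a * (q ^ 2) ^ i) = fun i ↦ 1 - a * q ^ (2 * i) := by
    simp only [pow_mul]
  have hodd : (fun i : ℕ ↦ 1 - a * q * (q ^ 2) ^ i) = fun i ↦ 1 - a * q ^ (2 * i + 1) := by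
    simp only [pow_succ', pow_mul, mul_assoc, pow_zero, mul_one]
  rw [qPochhammerInf, qPochhammerInf, heven, hodd]
  exact tprod_even_mul_odd (f := fun i ↦ 1 - a * q ^ i)
    (heven ▸ multipliable_one_sub_mul_pow hq a) (hodd ▸ multipliable_one_sub_mul_pow hq (a * q))

end NormedCommRing

variable {K : Type*} [NormedField K] {q : K}

lemma not_isOfFinOrder_of_norm_lt_one (hq : ‖q‖ < 1) : ¬IsOfFinOrder q :=
  fun h ↦ hq.ne h.norm_eq_one

variable [CompleteSpace K]

lemma qPochhammerInf_self_ne_zero (hq : ‖q‖ < 1) : qPochhammerInf q q ≠ 0 := by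
  simp only [qPochhammerInf, sub_eq_add_neg]
  refine tprod_one_add_ne_zero_of_summable (fun i ↦ ?_) (summable_norm_neg_mul_pow hq q)
  rw [← sub_eq_add_neg]
  exact one_sub_mul_pow_self_ne_zero (not_isOfFinOrder_of_norm_lt_one hq) i

lemma exists_norm_inv_qPochhammer_self_le (hq : ‖q‖ < 1) :
    ∃ C : ℝ, ∀ n, ‖(qPochhammer q q n)⁻¹‖ ≤ C := by
  obtain ⟨C, hC⟩ := (Metric.isBounded_range_of_tendsto _
    ((tendsto_qPochhammer hq q).inv₀ (qPochhammerInf_self_ne_zero hq))).exists_norm_le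
  exact ⟨C, fun n ↦ hC _ ⟨n, rfl⟩⟩

end InfiniteProducts

section TripleProduct

lemma tendsto_finsetSum_of_dominated_convergence {α β G : Type*} {l : Filter α} [l.NeBot]
    [NormedAddCommGroup G] [CompleteSpace G] {s : α → Finset β} {f : α → β → G} {g : β → G}
    {bound : β → ℝ} (hs : ∀ b, ∀ᶠ a in l, b ∈ s a) (hbound : Summable bound)
    (hlim : ∀ b, Tendsto (f · b) l (𝓝 (g b))) (hle : ∀ᶠ a in l, ∀ b ∈ s a, ‖f a b‖ ≤ bound b) :
    Tendsto (fun a ↦ ∑ b ∈ s a, f a b) l (𝓝 (∑' b, g b)) := by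
  simp only [fun a ↦ sum_eq_tsum_indicator (f a) (s a)]
  refine tendsto_tsum_of_dominated_convergence hbound (fun b ↦ ?_) ?_
  · refine (hlim b).congr' ?_
    filter_upwards [hs b] with a ha
    exact (Set.indicator_of_mem (Finset.mem_coe.mpr ha) _).symm
  · filter_upwards [hle] with a ha b
    by_cases hb : b ∈ s a
    · simpa [hb] using ha b hb
    · obtain ⟨a', hmem, hle'⟩ := ((hs b).and hle).exists
      simpa [hb] using (norm_nonneg _).trans (hle' b hmem)

lemma summable_pow_sq_mul_pow {r : ℝ} (hr : 0 ≤ r) (hr' : r < 1) (y : ℝ) :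
    Summable fun n : ℕ ↦ r ^ n ^ 2 * y ^ n := by
  have hlim : Tendsto (fun n ↦ ‖r ^ n * y‖) atTop (𝓝 0) := by
    simpa using ((tendsto_pow_atTop_nhds_zero_of_lt_one hr hr').mul_const y).norm
  refine summable_geometric_two.of_norm_bounded_eventually_nat ?_
  filter_upwards [hlim.eventually_le_const (by norm_num : (0 : ℝ) < 1 / 2)] with n hn
  rw [sq, pow_mul, ← mul_pow, norm_pow]
  gcongr

variable {K : Type*} [NormedField K] {p x : K}

lemma summable_norm_thetaSeries (hp : ‖p‖ < 1) (x : K) :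
    Summable fun n : ℤ ↦ ‖p ^ n ^ 2 * x ^ n‖ := by
  refine .of_nat_of_neg ?_ ?_
  · refine (summable_pow_sq_mul_pow (norm_nonneg p) hp ‖x‖).congr fun n ↦ ?_
    rw [norm_mul, zpow_natCast, norm_pow, ← norm_pow]
    norm_cast
  · refine (summable_pow_sq_mul_pow (norm_nonneg p) hp ‖x⁻¹‖).congr fun n ↦ ?_
    rw [norm_mul, zpow_neg, neg_sq, zpow_natCast, ← inv_pow, norm_pow x⁻¹, ← norm_pow]
    norm_cast

variable [CompleteSpace K]

lemma tendsto_sum_Icc_thetaSeries (hp : ‖p‖ < 1) (x : K) {q : K} (hq : ‖q‖ < 1) :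
    Tendsto (fun m : ℕ ↦ ∑ n ∈ Finset.Icc (-m : ℤ) m,
        p ^ n ^ 2 * x ^ n / (qPochhammer q q (m - n).toNat * qPochhammer q q (m + n).toNat))
      atTop (𝓝 (thetaSeries p x / qPochhammerInf q q ^ 2)) := by
  obtain ⟨C, hC⟩ := exists_norm_inv_qPochhammer_self_le hq
  have hC0 : 0 ≤ C := (norm_nonneg _).trans (hC 0)
  rw [thetaSeries, ← tsum_div_const]
  refine tendsto_finsetSum_of_dominated_convergence (fun n ↦ ?_)
    ((summable_norm_thetaSeries hp x).mul_right (C * C)) (fun n ↦ ?_) (.of_forall fun m n _ ↦ ?_)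
  · filter_upwards [eventually_ge_atTop n.natAbs] with m hm
    rw [Finset.mem_Icc]
    omega
  · have hlim (k : ℕ → ℕ) (hk : Tendsto k atTop atTop) := (tendsto_qPochhammer hq q).comp hk
    have hE := qPochhammerInf_self_ne_zero hq
    rw [sq (qPochhammerInf q q)]
    refine tendsto_const_nhds.div (.mul (hlim _ ?_) (hlim _ ?_)) (mul_ne_zero hE hE)
    · exact tendsto_atTop_atTop.mpr fun b ↦ ⟨b + n.natAbs, fun m hm ↦ by omega⟩
    · exact tendsto_atTop_atTop.mpr fun b ↦ ⟨b + n.natAbs, fun m hm ↦ by omega⟩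
  · rw [div_eq_mul_inv, mul_inv, norm_mul, norm_mul _⁻¹]
    gcongr
    · exact hC _
    · exact hC _

theorem jacobi_triple_product (hp : ‖p‖ < 1) (hx : x ≠ 0) :
    thetaSeries p x = qPochhammerInf (p ^ 2) (p ^ 2) *
      (qPochhammerInf (-(p * x)) (p ^ 2) * qPochhammerInf (-(p / x)) (p ^ 2)) := by
  have hq : ‖p ^ 2‖ < 1 := by
    rw [norm_pow]
    exact pow_lt_one₀ (norm_nonneg p) hp two_ne_zero
  rcases eq_or_ne p 0 with rfl | hp0
  · rw [thetaSeries, tsum_eq_single 0 fun n hn ↦ by simp [zero_zpow _ (pow_ne_zero 2 hn)]]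
    simp [qPochhammerInf]
  have hprod := (tendsto_qPochhammer hq (-(p * x))).mul (tendsto_qPochhammer hq (-(p / x)))
  have hsum := ((tendsto_qPochhammer hq (p ^ 2)).comp
    (tendsto_id.const_mul_atTop' two_pos)).mul (tendsto_sum_Icc_thetaSeries hp x hq)
  have hlim := tendsto_nhds_unique hprod (hsum.congr fun m ↦
    (finite_jacobi_triple_product hp0 (not_isOfFinOrder_of_norm_lt_one hq) hx m).symm)
  have hE := qPochhammerInf_self_ne_zero hq
  rw [hlim]
  field_simp

theorem thetaSeries_sq_mul_thetaSeries_sq (hp0 : p ≠ 0) (hp : ‖p‖ < 1) (hx : x ≠ 0) :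
    thetaSeries (p ^ 2) (p * x) * thetaSeries (p ^ 2) (x / p) =
      qPochhammerInf (p ^ 4) (p ^ 4) ^ 2 / qPochhammerInf (p ^ 2) (p ^ 2) * thetaSeries p x := by
  have hpow {n : ℕ} (hn : n ≠ 0) : ‖p ^ n‖ < 1 := by
    rw [norm_pow]
    exact pow_lt_one₀ (norm_nonneg p) hp hn
  have hsq : (p ^ 2) ^ 2 = p ^ 4 := by ring
  have hsplit (a : K) : qPochhammerInf (-(p * a)) (p ^ 4) * qPochhammerInf (-(p ^ 3 * a)) (p ^ 4) =
      qPochhammerInf (-(p * a)) (p ^ 2) := by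
    have h := qPochhammerInf_sq_mul (hsq ▸ hpow four_ne_zero) (-(p * a))
    rwa [hsq, show -(p * a) * p ^ 2 = -(p ^ 3 * a) by ring] at h
  have hadd : p ^ 2 * (p * x) = p ^ 3 * x := by ring
  have hadd' : p ^ 2 / (p * x) = p * x⁻¹ := by field_simp
  have hsub : p ^ 2 * (x / p) = p * x := by field_simp
  have hsub' : p ^ 2 / (x / p) = p ^ 3 * x⁻¹ := by field_simp
  have hE := qPochhammerInf_self_ne_zero (hpow two_ne_zero)
  rw [jacobi_triple_product (hpow two_ne_zero) (mul_ne_zero hp0 hx),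
    jacobi_triple_product (hpow two_ne_zero) (div_ne_zero hx hp0),
    jacobi_triple_product hp hx, hsq, hadd, hadd', hsub, hsub', div_eq_mul_inv p x,
    ← hsplit x, ← hsplit x⁻¹]
  field_simp

end TripleProduct

lemma theta00_eq_thetaSeries (τ z : ℂ) :
    theta00 τ z = thetaSeries (cexp (π * I * τ)) (cexp (2 * π * I * z)) := by
  refine tsum_congr fun n ↦ ?_
  rw [← Complex.exp_int_mul, ← Complex.exp_int_mul, mul_comm]
  congr 2 <;> push_cast <;> ring

lemma theta10_eq_exp_mul_theta00_add (τ z : ℂ) :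
    theta10 τ z = cexp (π * I * (z + τ / 4)) * theta00 τ (z + τ / 2) := by
  rw [theta10, theta00, ← tsum_mul_left]
  refine tsum_congr fun n ↦ ?_
  simp only [← Complex.exp_add]
  congr 1
  ring

lemma theta10_eq_exp_mul_theta00_sub (τ z : ℂ) :
    theta10 τ z = cexp (-(π * I * (z - τ / 4))) * theta00 τ (z - τ / 2) := by
  rw [theta10, theta00, ← (Equiv.subRight (1 : ℤ)).tsum_eq, ← tsum_mul_left]
  refine tsum_congr fun n ↦ ?_
  simp only [← Complex.exp_add, Equiv.subRight_apply]
  congr 1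
  push_cast
  ring

lemma theta10_two_mul_add_mul_theta10_two_mul_sub (τ z : ℂ) :
    theta10 (2 * τ) (z + τ / 2) * theta10 (2 * τ) (z - τ / 2) =
      theta00 (2 * τ) (z + τ / 2) * theta00 (2 * τ) (z - τ / 2) := by
  have hcancel : cexp (-(π * I * (z + τ / 2 - 2 * τ / 4))) *
      cexp (π * I * (z - τ / 2 + 2 * τ / 4)) = 1 := by
    rw [← Complex.exp_add, Complex.exp_eq_one_iff]
    exact ⟨0, by push_cast; ring⟩
  have hsub : z + τ / 2 - 2 * τ / 2 = z - τ / 2 := by ring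
  have hadd : z - τ / 2 + 2 * τ / 2 = z + τ / 2 := by ring
  rw [theta10_eq_exp_mul_theta00_sub (2 * τ) (z + τ / 2),
    theta10_eq_exp_mul_theta00_add (2 * τ) (z - τ / 2), hsub, hadd, mul_mul_mul_comm, hcancel,
    one_mul, mul_comm]

lemma dedekindEta_eq_exp_mul_qPochhammerInf (τ : ℂ) :
    dedekindEta τ = cexp (π * I * τ / 12) *
      qPochhammerInf (cexp (2 * π * I * τ)) (cexp (2 * π * I * τ)) := by
  rw [dedekindEta, qPochhammerInf]
  congr 1
  refine tprod_congr fun n ↦ ?_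
  rw [← pow_succ', ← Complex.exp_nat_mul]
  congr 2
  push_cast
  ring

lemma exp_mul_dedekindEta_sq_div (τ : ℂ) :
    cexp (2 * π * I * τ * -(1 / 8)) * (dedekindEta (2 * τ) ^ 2 / dedekindEta τ) =
      qPochhammerInf (cexp (π * I * τ) ^ 4) (cexp (π * I * τ) ^ 4) ^ 2 /
        qPochhammerInf (cexp (π * I * τ) ^ 2) (cexp (π * I * τ) ^ 2) := by
  have h2 : cexp (2 * π * I * τ) = cexp (π * I * τ) ^ 2 := by
    rw [← Complex.exp_nat_mul]
    congr 1
    push_cast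
    ring
  have h4 : cexp (2 * π * I * (2 * τ)) = cexp (π * I * τ) ^ 4 := by
    rw [← Complex.exp_nat_mul]
    congr 1
    push_cast
    ring
  have hexp : cexp (2 * π * I * τ * -(1 / 8)) * cexp (π * I * (2 * τ) / 12) ^ 2 =
      cexp (π * I * τ / 12) := by
    rw [← Complex.exp_nat_mul, ← Complex.exp_add]
    congr 1
    push_cast
    ring
  rw [dedekindEta_eq_exp_mul_qPochhammerInf, dedekindEta_eq_exp_mul_qPochhammerInf, h2, h4, mul_pow,
    ← mul_div_assoc, ← mul_assoc, hexp, mul_div_mul_left _ _ (Complex.exp_ne_zero _)]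

theorem theta00_two_mul_add_mul_theta00_two_mul_sub {τ : ℂ} (hτ : 0 < τ.im) (z : ℂ) :
    theta00 (2 * τ) (z + τ / 2) * theta00 (2 * τ) (z - τ / 2) =
      cexp (2 * π * I * τ * -(1 / 8)) * (dedekindEta (2 * τ) ^ 2 / dedekindEta τ) *
        theta00 τ z := by
  have hnorm : ‖cexp (π * I * τ)‖ < 1 := by
    simpa [Complex.norm_exp] using mul_pos Real.pi_pos hτ
  have hnome : cexp (π * I * (2 * τ)) = cexp (π * I * τ) ^ 2 := by
    rw [← Complex.exp_nat_mul]
    congr 1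
    push_cast
    ring
  have hadd : cexp (2 * π * I * (z + τ / 2)) = cexp (π * I * τ) * cexp (2 * π * I * z) := by
    rw [← Complex.exp_add]
    congr 1
    ring
  have hsub : cexp (2 * π * I * (z - τ / 2)) = cexp (2 * π * I * z) / cexp (π * I * τ) := by
    rw [← Complex.exp_sub]
    congr 1
    ring
  rw [exp_mul_dedekindEta_sq_div, theta00_eq_thetaSeries, theta00_eq_thetaSeries,
    theta00_eq_thetaSeries, hnome, hadd, hsub]
  exact thetaSeries_sq_mul_thetaSeries_sq (Complex.exp_ne_zero _) hnorm (Complex.exp_ne_zero _)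

theorem stmt10 (τ z : ℂ) (hτ : 0 < τ.im) :
    theta10 (2*τ) (z + τ/2) * theta10 (2*τ) (z - τ/2) =
      Complex.exp (2*(π:ℂ)*Complex.I*τ*(-(1/8))) * ((dedekindEta (2*τ))^2 / dedekindEta τ) * theta00 τ z := by
  rw [theta10_two_mul_add_mul_theta10_two_mul_sub, theta00_two_mul_add_mul_theta00_two_mul_sub hτ]

end
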